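/- arXiv:1901.10659 — 4 statements merged into one kernel-verified Lean document; each statement's English description precedes it below -/
import Mathlib

section
/- Let 𝔽 be a field, d ≥ 0 an integer, and V a (d+1)-dimensional vector space over 𝔽. Let {E*_i}_{i=0}^{d} be a system of mutually orthogonal idempotents in End(V), and let A ∈ End(V) satisfy E*_i A E*_j = 0 whenever |i−j| > 1 (0 ≤ i,j ≤ d). Let θ*_0,…,θ*_d ∈ 𝔽 and set A* = Σ_{i=0}^{d} θ*_i E*_i. Let β, γ* ∈ 𝔽 and let θ*_{−1}, θ*_{d+1} ∈ 𝔽 satisfy γ* = θ*_{i−1} − βθ*_i + θ*_{i+1} for 0 ≤ i ≤ d, and let δ* be the common value of θ*_{i−1}² − βθ*_{i−1}θ*_i + θ*_i² − γ*(θ*_{i−1} + θ*_i) (0 ≤ i ≤ d+1). Set a_i = tr(E*_iA) and suppose there exist γ, ω, η* ∈ 𝔽 such that a_i(θ*_i − θ*_{i−1})(θ*_i − θ*_{i+1}) = γθ*_i² + ωθ*_i + η* for 0 ≤ i ≤ d. Then A*²A − βA*AA* + AA*² − γ*(AA* + A*A) − δ*A = γA*² + ωA* + η*I. -/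
namespace LeonardPaper

variable {F : Type*} [Field F] {V : Type*} [AddCommGroup V] [Module F V]

/-- A system of mutually orthogonal (rank-one) idempotents in `End(V)`. -/
def MOISys (d : ℕ) (E : Fin (d + 1) → Module.End F V) : Prop :=
  (∀ i j, E i * E j = if i = j then E i else 0) ∧
  ∀ i, Module.finrank F (LinearMap.range (E i)) = 1

/-- The operator identity (eq. (3.12), "AW2") from the proof of the first main theorem:
`A*²A − βA*AA* + AA*² − γ*(AA* + A*A) − δ*A = γA*² + ωA* + η*I`. -/
theorem AW2_identity
    (d : ℕ) (hdim : Module.finrank F V = d + 1)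
    (Es : Fin (d + 1) → Module.End F V) (hEs : MOISys d Es)
    (A : Module.End F V)
    (hAfar : ∀ i j : Fin (d + 1), ((i : ℕ) + 1 < (j : ℕ) ∨ (j : ℕ) + 1 < (i : ℕ)) →
      Es i * A * Es j = 0)
    (θs : ℤ → F) (As : Module.End F V)
    (hAs : As = ∑ i : Fin (d + 1), θs ((i : ℕ) : ℤ) • Es i)
    (β γs δs : F)
    (hrec : ∀ i : ℤ, 0 ≤ i → i ≤ d → γs = θs (i - 1) - β * θs i + θs (i + 1))
    (hδ : ∀ i : ℤ, 0 ≤ i → i ≤ (d : ℤ) + 1 →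
      θs (i - 1) ^ 2 - β * θs (i - 1) * θs i + θs i ^ 2 - γs * (θs (i - 1) + θs i) = δs)
    (a : ℕ → F)
    (htr : ∀ i : Fin (d + 1), a i = LinearMap.trace F V (Es i * A))
    (γ ω ηs : F)
    (hai : ∀ i : ℕ, i ≤ d →
      a i * ((θs i - θs ((i : ℤ) - 1)) * (θs i - θs ((i : ℤ) + 1)))
        = γ * θs i ^ 2 + ω * θs i + ηs) :
    As ^ 2 * A - β • (As * A * As) + A * As ^ 2 - γs • (A * As + As * A) - δs • A
      = γ • As ^ 2 + ω • As + ηs • (1 : Module.End F V) := by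
  classical
  obtain ⟨horth, hrank⟩ := hEs
  have hv : ∀ i, ∃ v : V, v ≠ 0 ∧ Es i v = v := by
    intro i
    have h1 : LinearMap.range (Es i) ≠ ⊥ := by
      intro h
      have := hrank i
      rw [h] at this
      simp at this
    obtain ⟨v, ⟨w, hw⟩, hv0⟩ := Submodule.exists_mem_ne_zero_of_ne_bot h1
    refine ⟨v, hv0, ?_⟩
    have h2 := horth i i
    rw [if_pos rfl] at h2
    rw [← hw, ← Module.End.mul_apply, h2]
  choose v hv0 hvE using hv
  have hEv : ∀ i j, Es i (v j) = if i = j then v j else 0 := by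
    intro i j
    rw [← hvE j, ← Module.End.mul_apply, horth]
    split_ifs with h
    · subst h; rfl
    · rfl
  have hli : LinearIndependent F v := by
    rw [Fintype.linearIndependent_iff]
    intro g hg i
    have h := congrArg (Es i) hg
    simp only [map_sum, map_smul, hEv, map_zero, smul_ite, smul_zero, Finset.sum_ite_eq,
      Finset.mem_univ, if_true] at h
    exact (smul_eq_zero.mp h).resolve_right (hv0 i)
  let b := basisOfLinearIndependentOfCardEqFinrank hli (by simp [hdim])
  have hb : ∀ i, b i = v i := fun i => by simp [b]
  have hone : ∑ i, Es i = 1 := by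
    apply b.ext
    intro j
    simp [hb, LinearMap.sum_apply, hEv]
  have hEf : ∀ i x, Es i x = b.coord i x • v i := by
    intro i x
    have : Es i = (b.coord i).smulRight (v i) := by
      apply b.ext
      intro j
      rw [LinearMap.smulRight_apply, hb, hEv, ← hb j, Module.Basis.coord_apply,
        Module.Basis.repr_self, Finsupp.single_apply]
      by_cases h : i = j
      · subst h; simp [hb]
      · simp [h, Ne.symm h]
    rw [this]; rfl
  have hdiag : ∀ i : Fin (d + 1), Es i * A * Es i = a i • Es i := by
    intro i
    have h1 : a i = b.coord i (A (v i)) := by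
      have : Es i * A = ((b.coord i).comp A).smulRight (v i) := by
        ext x
        simp [hEf]
      have hfin : Module.Finite F V := Module.Finite.of_basis b
      rw [htr, this, LinearMap.trace_smulRight]
      rfl
    ext x
    rw [Module.End.mul_apply, Module.End.mul_apply, LinearMap.smul_apply, hEf i x, map_smul,
      map_smul, hEf i (A (v i)), h1, smul_comm]
  have hEA : ∀ i, Es i * As = θs ((i : ℕ) : ℤ) • Es i := by
    intro i
    rw [hAs, Finset.mul_sum]
    simp [horth]
  have hAE : ∀ i, As * Es i = θs ((i : ℕ) : ℤ) • Es i := by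
    intro i
    rw [hAs, Finset.sum_mul]
    simp [horth]
  have hsand : ∀ X Y : Module.End F V, (∀ i j, Es i * X * Es j = Es i * Y * Es j) → X = Y := by
    intro X Y h
    have key : ∀ Z : Module.End F V, Z = ∑ i, ∑ j, Es i * Z * Es j := by
      intro Z
      simp_rw [← Finset.mul_sum, hone, mul_one, ← Finset.sum_mul, hone, one_mul]
    rw [key X, key Y]
    simp_rw [h]
  apply hsand
  intro i j
  have e1 : Es i * (As ^ 2 * A) * Es j = (θs i ^ 2) • (Es i * A * Es j) := by
    rw [pow_two, ← mul_assoc, ← mul_assoc, hEA, smul_mul_assoc, hEA]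
    simp only [smul_mul_assoc, smul_smul, pow_two]
  have e2 : Es i * (As * A * As) * Es j = (θs i * θs j) • (Es i * A * Es j) := by
    rw [← mul_assoc, ← mul_assoc, hEA, mul_assoc _ As, hAE]
    simp only [smul_mul_assoc, mul_smul_comm, smul_smul, mul_comm]
  have e3 : Es i * (A * As ^ 2) * Es j = (θs j ^ 2) • (Es i * A * Es j) := by
    rw [pow_two, ← mul_assoc, ← mul_assoc, mul_assoc _ As, hAE, mul_smul_comm, mul_assoc _ As, hAE]
    simp only [mul_smul_comm, smul_smul, pow_two]
  have e4 : Es i * (A * As) * Es j = θs j • (Es i * A * Es j) := by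
    rw [← mul_assoc, mul_assoc _ As, hAE, mul_smul_comm]
  have e5 : Es i * (As * A) * Es j = θs i • (Es i * A * Es j) := by
    rw [← mul_assoc, hEA]
    simp only [smul_mul_assoc]
  have e6 : Es i * As ^ 2 * Es j = (θs i ^ 2) • (Es i * Es j) := by
    rw [pow_two, ← mul_assoc, hEA, smul_mul_assoc, hEA]
    simp only [smul_mul_assoc, smul_smul, pow_two]
  have e7 : Es i * As * Es j = θs i • (Es i * Es j) := by
    rw [hEA, smul_mul_assoc]
  have eL : Es i * (As ^ 2 * A - β • (As * A * As) + A * As ^ 2 - γs • (A * As + As * A) - δs • A)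
      * Es j = (θs i ^ 2 - β * (θs i * θs j) + θs j ^ 2 - γs * (θs j + θs i) - δs) •
        (Es i * A * Es j) := by
    simp only [mul_sub, mul_add, sub_mul, add_mul, mul_smul_comm, smul_mul_assoc, e1, e2, e3, e4, e5]
    module
  have eR : Es i * (γ • As ^ 2 + ω • As + ηs • (1 : Module.End F V)) * Es j
      = (γ * θs i ^ 2 + ω * θs i + ηs) • (Es i * Es j) := by
    simp only [mul_add, add_mul, mul_smul_comm, smul_mul_assoc, e6, e7, mul_one]
    module
  rw [eL, eR]
  have hi : (i : ℕ) ≤ d := Nat.lt_succ_iff.mp i.2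
  have hj : (j : ℕ) ≤ d := Nat.lt_succ_iff.mp j.2
  by_cases hij : i = j
  · subst hij
    have h0 := horth i i
    rw [if_pos rfl] at h0
    rw [hdiag, h0, smul_smul, ← hai i hi]
    congr 1
    have r := hrec i (by omega) (by omega)
    have s := hδ i (by omega) (by omega)
    have r' : θs ((i : ℕ) + 1 : ℤ) = γs - θs ((i : ℕ) - 1 : ℤ) + β * θs (i : ℕ) := by
      rw [r]; ring
    rw [r', ← s]
    ring
  · rw [horth, if_neg hij, smul_zero]
    have hne : (i : ℕ) ≠ j := fun h => hij (Fin.ext h)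
    by_cases hf : (i : ℕ) + 1 < (j : ℕ) ∨ (j : ℕ) + 1 < (i : ℕ)
    · rw [hAfar i j hf, smul_zero]
    · have hc : (j : ℕ) = (i : ℕ) + 1 ∨ (i : ℕ) = (j : ℕ) + 1 := by omega
      suffices h : θs i ^ 2 - β * (θs i * θs j) + θs j ^ 2 - γs * (θs j + θs i) - δs = 0 by
        rw [h, zero_smul]
      rcases hc with hc | hc
      · have s := hδ j (by omega) (by omega)
        have : ((j : ℕ) : ℤ) - 1 = (i : ℕ) := by omega
        rw [this] at s
        rw [← s]; ring
      · have s := hδ i (by omega) (by omega)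
        have : ((i : ℕ) : ℤ) - 1 = (j : ℕ) := by omega
        rw [this] at s
        rw [← s]; ring

end LeonardPaper
end

section
/- Let 𝔽 be a field, d ≥ 1 an integer, and V a (d+1)-dimensional vector space over 𝔽. Let {E*_i}_{i=0}^{d} be a system of mutually orthogonal idempotents in End(V); let A ∈ End(V) satisfy E*_i A E*_j = 0 if |i−j| > 1 and E*_i A E*_j ≠ 0 if |i−j| = 1 (0 ≤ i,j ≤ d); let θ*_0,…,θ*_d ∈ 𝔽 and A* = Σ_{i=0}^{d} θ*_iE*_i; let θ_0,…,θ_d ∈ 𝔽 be mutually distinct; suppose θ*_i ≠ θ*_0 for 1 ≤ i ≤ d; suppose there exist β, γ* ∈ 𝔽 with γ* = θ*_{i−1} − βθ*_i + θ*_{i+1} for 1 ≤ i ≤ d−1, extended by θ*_{−1}, θ*_{d+1} so this also holds at i = 0 and i = d; suppose there exist nonzero v_0, v_1 ∈ V with Av_0 = θ_0v_0, Av_1 = θ_1v_1, and A*v_0 − v_1 ∈ 𝔽v_0; suppose there exist γ, ω, η* ∈ 𝔽 with a_i(θ*_i − θ*_{i−1})(θ*_i − θ*_{i+1}) = γθ*_i²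 + ωθ*_i + η* for 0 ≤ i ≤ d, where a_i = tr(E*_iA); and suppose θ_{i−1} − βθ_i + θ_{i+1} = γ for 1 ≤ i ≤ d−1. Then for 1 ≤ i ≤ d there exists a nonzero vector v_i ∈ V such that Av_i = θ_iv_i and A*v_{i−1} − v_i ∈ span(v_0, …, v_{i−1}). -/
namespace LeonardPaper

variable {F : Type*} [Field F] {V : Type*} [AddCommGroup V] [Module F V]

theorem moi_basis (d : ℕ) (hdim : Module.finrank F V = d + 1)
    (Es : Fin (d + 1) → Module.End F V) (hEs : MOISys d Es) :
    ∃ b : Module.Basis (Fin (d + 1)) F V, ∀ i x, Es i x = b.repr x i • b i := by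
  obtain ⟨hm, hr⟩ := hEs
  have hu : ∀ i, ∃ u : V, u ≠ 0 ∧ Es i u = u ∧ ∀ x, ∃ c : F, Es i x = c • u := by
    intro i
    obtain ⟨⟨u, y, hy⟩, hne, hs⟩ := finrank_eq_one_iff'.1 (hr i)
    refine ⟨u, fun h => hne (Subtype.ext h), ?_, ?_⟩
    · rw [← hy, ← Module.End.mul_apply, hm, if_pos rfl]
    · intro x
      obtain ⟨c, hc⟩ := hs ⟨Es i x, x, rfl⟩
      exact ⟨c, (congrArg Subtype.val hc).symm⟩
  choose u hu0 hu1 hu2 using hu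
  have hd : ∀ i j, i ≠ j → Es i (u j) = 0 := by
    intro i j hij
    rw [← hu1 j, ← Module.End.mul_apply, hm, if_neg hij]; rfl
  have key : ∀ (g : Fin (d+1) → F) i, Es i (∑ j, g j • u j) = g i • u i := by
    intro g i
    rw [map_sum, Finset.sum_eq_single i]
    · rw [map_smul, hu1]
    · intro j _ hj
      rw [map_smul, hd i j hj.symm, smul_zero]
    · simp
  have hli : LinearIndependent F u := by
    rw [Fintype.linearIndependent_iff]
    intro g hg i
    have := key g i
    rw [hg, map_zero] at this
    exact (smul_eq_zero.1 this.symm).resolve_right (hu0 i)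
  let b := basisOfLinearIndependentOfCardEqFinrank hli (by simp [hdim])
  have hb : ∀ i, b i = u i := by intro i; simp [b]
  refine ⟨b, fun i x => ?_⟩
  conv_lhs => rw [← b.sum_repr x]
  simp only [hb]
  rw [key]

theorem sub_top (d : ℕ) (b : Module.Basis (Fin (d + 1)) F V) (A As : Module.End F V)
    (θs : ℤ → F)
    (hfar : ∀ i j : Fin (d + 1), ((i : ℕ) + 1 < (j : ℕ) ∨ (j : ℕ) + 1 < (i : ℕ)) →
      b.repr (A (b j)) i = 0)
    (hnear : ∀ i j : Fin (d + 1), ((i : ℕ) + 1 = (j : ℕ) ∨ (j : ℕ) + 1 = (i : ℕ)) →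
      b.repr (A (b j)) i ≠ 0)
    (hAs : ∀ x i, b.repr (As x) i = θs ((i : ℕ) : ℤ) * b.repr x i)
    (h2 : ∀ i : ℤ, 1 ≤ i → i ≤ d → θs i ≠ θs 0)
    (v : V) (hv : v ≠ 0) (t : F) (hAv : A v = t • v)
    (W : Submodule F V) (hvW : v ∈ W) (hWA : ∀ x ∈ W, A x ∈ W) (hWAs : ∀ x ∈ W, As x ∈ W) :
    W = ⊤ := by
  have hco : ∀ i, ∑ j, b.repr v j * b.repr (A (b j)) i = t * b.repr v i := by
    intro i
    have h := congrArg (fun x => b.repr (A x) i) (b.sum_repr v)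
    simp only [hAv, map_sum, map_smul, Finsupp.coe_finset_sum, Finset.sum_apply,
      Finsupp.smul_apply, smul_eq_mul] at h
    exact h
  have h0 : b.repr v 0 ≠ 0 := by
    intro h0
    apply hv
    have : ∀ n : ℕ, ∀ k : Fin (d+1), (k : ℕ) = n → b.repr v k = 0 := by
      intro n
      induction n using Nat.strong_induction_on with
      | _ n ih =>
        intro k hk
        rcases Nat.eq_zero_or_pos n with hn | hn
        · have : k = 0 := Fin.ext (by simp [hk, hn])
          rw [this, h0]
        · have hlt := k.2
          let l : Fin (d+1) := ⟨n-1, by omega⟩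
          have hl : (l : ℕ) = n - 1 := rfl
          have h := hco l
          rw [ih (n-1) (by omega) l rfl, mul_zero, Finset.sum_eq_single k] at h
          · exact (mul_eq_zero.1 h).resolve_right (hnear l k (by omega))
          · intro j _ hj
            have hj' : (j : ℕ) ≠ k := fun h => hj (Fin.ext h)
            rcases lt_or_gt_of_ne hj' with h' | h'
            · rw [ih j (by omega) j rfl, zero_mul]
            · rw [hfar l j (by omega), mul_zero]
          · simp
    apply b.repr.injective
    ext k
    simpa using this k k rfl
  have hy : ∀ n : ℕ, n ≤ d → ∃ y ∈ W, b.repr y 0 ≠ 0 ∧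
      ∀ k : Fin (d+1), 1 ≤ (k : ℕ) → (k : ℕ) ≤ n → b.repr y k = 0 := by
    intro n
    induction n with
    | zero => intro _; exact ⟨v, hvW, h0, fun k h h' => by omega⟩
    | succ n ih =>
      intro hn
      obtain ⟨y, hyW, hy0, hyk⟩ := ih (by omega)
      refine ⟨As y - θs ((n+1 : ℕ) : ℤ) • y, W.sub_mem (hWAs y hyW) (W.smul_mem _ hyW), ?_, ?_⟩
      · have : b.repr (As y - θs ((n+1 : ℕ) : ℤ) • y) 0
            = (θs 0 - θs ((n+1 : ℕ) : ℤ)) * b.repr y 0 := by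
          simp only [map_sub, map_smul, Finsupp.sub_apply, Finsupp.smul_apply, hAs, smul_eq_mul]
          simp; ring
        rw [this]
        exact mul_ne_zero (sub_ne_zero.2 (h2 _ (by push_cast; omega) (by exact_mod_cast hn)).symm) hy0
      · intro k hk hkn
        simp only [map_sub, map_smul, Finsupp.sub_apply, Finsupp.smul_apply, hAs, smul_eq_mul]
        rcases Nat.lt_or_ge k (n+1) with h | h
        · rw [hyk k hk (by omega)]; ring
        · rw [show (k : ℕ) = n + 1 by omega]; ring
  have hb0 : b 0 ∈ W := by
    obtain ⟨y, hyW, hy0, hyk⟩ := hy d le_rfl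
    have : y = b.repr y 0 • b 0 := by
      conv_lhs => rw [← b.sum_repr y]
      rw [Finset.sum_eq_single 0]
      · intro k _ hk
        have : (k : ℕ) ≠ 0 := fun h => hk (Fin.ext (by simpa using h))
        rw [hyk k (by omega) (by omega), zero_smul]
      · simp
    rw [this] at hyW
    exact (W.smul_mem_iff hy0).1 hyW
  have hbk : ∀ n : ℕ, ∀ k : Fin (d+1), (k : ℕ) = n → b k ∈ W := by
    intro n
    induction n using Nat.strong_induction_on with
    | _ n ih =>
      intro k hk
      rcases Nat.eq_zero_or_pos n with hn | hn
      · have : k = 0 := Fin.ext (by simp [hk, hn])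
        rw [this]; exact hb0
      · have hlt := k.2
        let l : Fin (d+1) := ⟨n-1, by omega⟩
        have hl : (l : ℕ) = n - 1 := rfl
        have h := hWA _ (ih (n-1) (by omega) l rfl)
        rw [← b.sum_repr (A (b l)), ← Finset.add_sum_erase _ _ (Finset.mem_univ k)] at h
        have h' : ∑ j ∈ Finset.univ.erase k, b.repr (A (b l)) j • b j ∈ W := by
          refine W.sum_mem fun j hj => ?_
          have hj' : (j : ℕ) ≠ k := fun h => (Finset.mem_erase.1 hj).1 (Fin.ext h)
          rcases lt_or_gt_of_ne hj' with h' | h'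
          · exact W.smul_mem _ (ih j (by omega) j rfl)
          · rw [hfar j l (by omega), zero_smul]; exact W.zero_mem
        exact (W.smul_mem_iff (hnear k l (by omega))).1 ((W.add_mem_iff_left h').1 h)
  rw [eq_top_iff, ← b.span_eq, Submodule.span_le]
  rintro _ ⟨k, rfl⟩
  exact hbk k k rfl

theorem aw_rel (d : ℕ) (b : Module.Basis (Fin (d + 1)) F V) (A As : Module.End F V)
    (θs : ℤ → F) (a : ℕ → F)
    (hfar : ∀ i j : Fin (d + 1), ((i : ℕ) + 1 < (j : ℕ) ∨ (j : ℕ) + 1 < (i : ℕ)) →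
      b.repr (A (b j)) i = 0)
    (hdiag : ∀ i : Fin (d + 1), b.repr (A (b i)) i = a i)
    (hAs : ∀ x i, b.repr (As x) i = θs ((i : ℕ) : ℤ) * b.repr x i)
    (β γs : F)
    (h3 : ∀ i : ℤ, 0 ≤ i → i ≤ d → γs = θs (i - 1) - β * θs i + θs (i + 1))
    (γ ω ηs : F)
    (h5 : ∀ i : ℕ, i ≤ d →
      a i * ((θs i - θs ((i : ℤ) - 1)) * (θs i - θs ((i : ℤ) + 1)))
        = γ * θs i ^ 2 + ω * θs i + ηs) :
    ∃ ρ : F, ∀ x, As (As (A x)) - β • As (A (As x)) + A (As (As x))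
      - γs • (As (A x) + A (As x)) - ρ • A x = γ • As (As x) + ω • As x + ηs • x := by
  obtain ⟨ρ, hρ⟩ : ∃ ρ : F, ρ = θs (-1) ^ 2 - β * θs (-1) * θs 0 + θs 0 ^ 2
    - γs * (θs (-1) + θs 0) := ⟨_, rfl⟩
  have hr : ∀ n : ℕ, n ≤ d + 1 → ρ = θs ((n : ℤ) - 1) ^ 2 - β * θs ((n : ℤ) - 1) * θs n + θs n ^ 2
    - γs * (θs ((n : ℤ) - 1) + θs n) := by
    intro n
    induction n with
    | zero => intro _; simpa using hρ
    | succ n ih =>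
      intro hn
      rw [ih (by omega)]
      have h := h3 n (by omega) (by omega)
      push_cast
      rw [add_sub_cancel_right]
      linear_combination (-θs ((n:ℤ)-1) + θs ((n:ℤ)+1)) * h
  have hAsb : ∀ j, As (b j) = θs ((j : ℕ) : ℤ) • b j := by
    intro j
    apply b.repr.injective
    ext i
    rw [hAs, map_smul, Finsupp.smul_apply, smul_eq_mul, b.repr_self]
    by_cases h : j = i
    · rw [h]
    · simp [Finsupp.single_apply, h]
  refine ⟨ρ, fun x => ?_⟩
  let L : Module.End F V := As * As * A - β • (As * A * As) + A * As * As
    - γs • (As * A + A * As) - ρ • A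
  let R : Module.End F V := γ • (As * As) + ω • As + ηs • 1
  suffices L = R from congrArg (fun f : Module.End F V => f x) this
  apply b.ext
  intro j
  apply b.repr.injective
  ext i
  simp only [L, R, LinearMap.sub_apply, LinearMap.add_apply, LinearMap.smul_apply,
    Module.End.mul_apply, Module.End.one_apply, map_sub, map_add, map_smul, Finsupp.sub_apply,
    Finsupp.add_apply, Finsupp.smul_apply, hAs, hAsb, smul_eq_mul, smul_smul]
  by_cases hij : i = j
  · subst hij
    rw [hdiag, b.repr_self, Finsupp.single_eq_same]
    have e1 := h5 i (by omega)
    have e2 := h3 i (by omega) (by omega)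
    have e3 := hr i (by omega)
    linear_combination e1 - (a i) * (θs ((i:ℕ):ℤ) - θs (((i:ℕ):ℤ) - 1)) * e2 - a i * e3
  · have hij' : (i : ℕ) ≠ j := fun h => hij (Fin.ext h)
    rw [b.repr_self, Finsupp.single_eq_of_ne hij]
    by_cases h1 : (i : ℕ) + 1 = j
    · have e3 := hr j (by omega)
      rw [← h1] at e3 ⊢
      push_cast at e3 ⊢
      rw [add_sub_cancel_right] at e3
      linear_combination -b.repr (A (b j)) i * e3
    · by_cases h2 : (j : ℕ) + 1 = i
      · have e3 := hr i (by omega)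
        rw [← h2] at e3 ⊢
        push_cast at e3 ⊢
        rw [add_sub_cancel_right] at e3
        linear_combination -b.repr (A (b j)) i * e3
      · rw [hfar i j (by omega)]; ring

theorem solve_eig (A : Module.End F V) (S : Set V) (μ : F)
    (hS : ∀ x ∈ S, ∃ t : F, t ≠ μ ∧ A x = t • x) (z : V) (hz : z ∈ Submodule.span F S) :
    ∃ w ∈ Submodule.span F S, A w - μ • w = z := by
  induction hz using Submodule.span_induction with
  | mem x hx =>
    obtain ⟨t, ht, h⟩ := hS x hx
    refine ⟨(t - μ)⁻¹ • x, Submodule.smul_mem _ _ (Submodule.subset_span hx), ?_⟩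
    rw [map_smul, h, smul_comm μ, ← smul_sub, ← sub_smul, smul_smul,
      inv_mul_cancel₀ (sub_ne_zero.2 ht), one_smul]
  | zero => exact ⟨0, Submodule.zero_mem _, by simp⟩
  | add x y _ _ hx hy =>
    obtain ⟨p, hp, rfl⟩ := hx
    obtain ⟨q, hq, rfl⟩ := hy
    exact ⟨p + q, Submodule.add_mem _ hp hq, by rw [map_add, smul_add]; abel⟩
  | smul c x _ hx =>
    obtain ⟨p, hp, rfl⟩ := hx
    exact ⟨c • p, Submodule.smul_mem _ _ hp, by rw [map_smul, smul_sub, smul_comm μ]⟩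

/-- The eigenvector-chain claim from the proof of the first main theorem: under the
hypotheses of that theorem, there is a chain of nonzero vectors `v 0 = v0, v 1, …, v d`
with `A (v i) = θ i • v i` and `As (v (i-1)) - v i ∈ span (v 0, …, v (i-1))` for
`1 ≤ i ≤ d`. -/
theorem eigenvector_chain
    (d : ℕ) (hd : 1 ≤ d) (hdim : Module.finrank F V = d + 1)
    (Es : Fin (d + 1) → Module.End F V) (hEs : MOISys d Es)
    (A : Module.End F V)
    (hAfar : ∀ i j : Fin (d + 1), ((i : ℕ) + 1 < (j : ℕ) ∨ (j : ℕ) + 1 < (i : ℕ)) →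
      Es i * A * Es j = 0)
    (hAnear : ∀ i j : Fin (d + 1), ((i : ℕ) + 1 = (j : ℕ) ∨ (j : ℕ) + 1 = (i : ℕ)) →
      Es i * A * Es j ≠ 0)
    (θs : ℤ → F) (As : Module.End F V)
    (hAs : As = ∑ i : Fin (d + 1), θs ((i : ℕ) : ℤ) • Es i)
    (θ : ℤ → F) (a : ℕ → F)
    (ha : ∀ i : Fin (d + 1), a i = LinearMap.trace F V (Es i * A))
    (h1 : ∀ i j : ℤ, 0 ≤ i → i ≤ d → 0 ≤ j → j ≤ d → i ≠ j → θ i ≠ θ j)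
    (h2 : ∀ i : ℤ, 1 ≤ i → i ≤ d → θs i ≠ θs 0)
    (β γs : F)
    (h3 : ∀ i : ℤ, 0 ≤ i → i ≤ d → γs = θs (i - 1) - β * θs i + θs (i + 1))
    (v0 v1 : V) (hv0 : v0 ≠ 0) (hv1 : v1 ≠ 0)
    (hAv0 : A v0 = θ 0 • v0) (hAv1 : A v1 = θ 1 • v1)
    (hAsv01 : ∃ t : F, As v0 - v1 = t • v0)
    (γ ω ηs : F)
    (h5 : ∀ i : ℕ, i ≤ d →
      a i * ((θs i - θs ((i : ℤ) - 1)) * (θs i - θs ((i : ℤ) + 1)))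
        = γ * θs i ^ 2 + ω * θs i + ηs)
    (h6 : ∀ i : ℤ, 1 ≤ i → i ≤ (d : ℤ) - 1 → θ (i - 1) - β * θ i + θ (i + 1) = γ) :
    ∃ v : ℕ → V, v 0 = v0 ∧
      ∀ i : ℕ, 1 ≤ i → i ≤ d →
        v i ≠ 0 ∧ A (v i) = θ (i : ℤ) • v i ∧
        As (v (i - 1)) - v i ∈ Submodule.span F (v '' {j : ℕ | j < i}) := by
  obtain ⟨b, hb⟩ := moi_basis d hdim Es hEs
  have hEAE : ∀ i j x, (Es i * A * Es j) x = (b.repr x j * b.repr (A (b j)) i) • b i := by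
    intro i j x
    rw [Module.End.mul_apply, Module.End.mul_apply, hb j, map_smul, hb i, map_smul,
      Finsupp.smul_apply, smul_eq_mul]
  have hfar : ∀ i j : Fin (d + 1), ((i : ℕ) + 1 < (j : ℕ) ∨ (j : ℕ) + 1 < (i : ℕ)) →
      b.repr (A (b j)) i = 0 := by
    intro i j hij
    have h := hEAE i j (b j)
    rw [hAfar i j hij, b.repr_self, Finsupp.single_eq_same, one_mul, LinearMap.zero_apply] at h
    exact (smul_eq_zero.1 h.symm).resolve_right (b.ne_zero i)
  have hnear : ∀ i j : Fin (d + 1), ((i : ℕ) + 1 = (j : ℕ) ∨ (j : ℕ) + 1 = (i : ℕ)) →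
      b.repr (A (b j)) i ≠ 0 := by
    intro i j hij h
    apply hAnear i j hij
    ext x
    rw [hEAE, h, mul_zero, zero_smul, LinearMap.zero_apply]
  have hdiag : ∀ i : Fin (d + 1), b.repr (A (b i)) i = a i := by
    intro i
    rw [ha, LinearMap.trace_eq_matrix_trace F b, Matrix.trace, Finset.sum_eq_single i]
    · simp [LinearMap.toMatrix_apply, hb]
    · intro k _ hk
      simp [LinearMap.toMatrix_apply, hb, Finsupp.single_eq_of_ne hk]
    · simp
  have hAsr : ∀ x i, b.repr (As x) i = θs ((i : ℕ) : ℤ) * b.repr x i := by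
    intro x i
    rw [hAs]
    simp only [LinearMap.sum_apply, LinearMap.smul_apply, hb, map_sum, map_smul,
      Finsupp.coe_finset_sum, Finset.sum_apply, Finsupp.smul_apply, smul_eq_mul, b.repr_self]
    rw [Finset.sum_eq_single i]
    · simp
    · intro k _ hk
      rw [Finsupp.single_eq_of_ne hk.symm]; ring
    · simp
  obtain ⟨ρ, hAW⟩ := aw_rel d b A As θs a hfar hdiag hAsr β γs h3 γ ω ηs h5
  have main : ∀ n : ℕ, 1 ≤ n → n ≤ d → ∃ v : ℕ → V, v 0 = v0 ∧
      ∀ i : ℕ, 1 ≤ i → i ≤ n →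
        v i ≠ 0 ∧ A (v i) = θ (i : ℤ) • v i ∧
        As (v (i - 1)) - v i ∈ Submodule.span F (v '' {j : ℕ | j < i}) := by
    intro n hn
    induction n, hn using Nat.le_induction with
    | base =>
      intro _
      obtain ⟨t, ht⟩ := hAsv01
      refine ⟨fun n => if n = 0 then v0 else v1, by simp, fun i hi hi' => ?_⟩
      obtain rfl : i = 1 := by omega
      refine ⟨by simpa using hv1, by simpa using hAv1, ?_⟩
      simp only [Nat.sub_self, if_true, one_ne_zero, if_false, ht]
      exact Submodule.smul_mem _ _ (Submodule.subset_span ⟨0, by simp, by simp⟩)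
    | succ n hn ih =>
      intro hnd
      obtain ⟨v, hv0', hv⟩ := ih (by omega)
      have hA : ∀ i : ℕ, i ≤ n → A (v i) = θ (i : ℤ) • v i := by
        intro i hi
        rcases Nat.eq_zero_or_pos i with h | h
        · subst h; simpa [hv0'] using hAv0
        · exact (hv i h hi).2.1
      let W : ℕ → Submodule F V := fun m => Submodule.span F (v '' {j : ℕ | j < m})
      have hW : ∀ j m, j < m → v j ∈ W m := fun j m h => Submodule.subset_span ⟨j, h, rfl⟩
      have hWm : ∀ m m', m ≤ m' → W m ≤ W m' := fun m m' h =>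
        Submodule.span_mono (Set.image_mono fun j hj => lt_of_lt_of_le hj h)
      have hWA : ∀ m, m ≤ n + 1 → ∀ x ∈ W m, A x ∈ W m := by
        intro m hm x hx
        have : W m ≤ (W m).comap A := by
          refine Submodule.span_le.2 ?_
          rintro _ ⟨j, hj, rfl⟩
          have hj' : j < m := hj
          show A (v j) ∈ W m
          rw [hA j (by omega)]
          exact Submodule.smul_mem _ _ (hW j m hj)
        exact this hx
      have hWAs : ∀ m, m ≤ n → ∀ x ∈ W m, As x ∈ W (m + 1) := by
        intro m hm x hx
        have : W m ≤ (W (m+1)).comap As := by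
          refine Submodule.span_le.2 ?_
          rintro _ ⟨j, hj, rfl⟩
          have hj' : j < m := hj
          show As (v j) ∈ W (m+1)
          have h := (hv (j+1) (by omega) (by omega)).2.2
          rw [Nat.add_sub_cancel] at h
          have h' := Submodule.add_mem _ (hWm (j+1) (m+1) (by omega) h) (hW (j+1) (m+1) (by omega))
          rwa [sub_add_cancel] at h'
        exact this hx
      -- the key containment
      have hz : A (As (v n)) - θ ((n + 1 : ℕ) : ℤ) • As (v n) ∈ W (n + 1) := by
        obtain ⟨w, hw, hwe⟩ : ∃ w ∈ W n, As (v (n-1)) = v n + w :=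
          ⟨_, (hv n hn le_rfl).2.2, by abel⟩
        have hrel := hAW (v (n-1))
        have hth := h6 n (by omega) (by omega)
        have hAn1 := hA (n-1) (by omega)
        rw [Nat.cast_sub hn, Nat.cast_one] at hAn1
        have e : A (As (v n)) - θ ((n + 1 : ℕ) : ℤ) • As (v n)
            = (γ - θ ((n:ℤ) - 1)) • As w + β • As (A w) - A (As w)
              + γs • (θ ((n:ℤ) - 1) • (v n + w) + (θ n • v n + A w))
              + (ρ * θ ((n:ℤ) - 1)) • v (n-1) + ω • (v n + w) + ηs • v (n-1) := by
          simp only [hAn1, hwe, map_add, map_smul, hA n le_rfl] at hrel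
          have hth' : θ ((n + 1 : ℕ) : ℤ) = γ - θ ((n:ℤ) - 1) + β * θ n := by
            push_cast; linear_combination hth
          rw [hth']
          linear_combination (norm := module) hrel
        rw [e]
        have m1 := hWAs n le_rfl w hw
        have m2 := hWAs n le_rfl _ (hWA n (by omega) w hw)
        have m3 := hWA (n+1) le_rfl _ m1
        have m4 := hW n (n+1) (by omega)
        have m5 := hWm n (n+1) (by omega) hw
        have m6 := hWA (n+1) le_rfl _ m5
        have m7 := hW (n-1) (n+1) (by omega)
        refine Submodule.add_mem _ (Submodule.add_mem _ (Submodule.add_mem _ (Submodule.add_mem _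
          (Submodule.sub_mem _ (Submodule.add_mem _ ?_ ?_) m3) ?_) ?_) ?_) ?_ <;>
          apply Submodule.smul_mem
        · exact m1
        · exact m2
        · exact Submodule.add_mem _ (Submodule.smul_mem _ _ (Submodule.add_mem _ m4 m5))
            (Submodule.add_mem _ (Submodule.smul_mem _ _ m4) m6)
        · exact m7
        · exact Submodule.add_mem _ m4 m5
        · exact m7
      obtain ⟨w, hw, hwe⟩ := solve_eig A _ (θ ((n + 1 : ℕ) : ℤ)) (by
        rintro _ ⟨j, hj, rfl⟩
        have hj' : j < n + 1 := hj
        exact ⟨θ j, h1 _ _ (by omega) (by omega) (by omega) (by omega) (by omega),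
          hA j (by omega)⟩) _ hz
      have hne : As (v n) - w ≠ 0 := by
        intro h
        have hAsn : As (v n) ∈ W (n+1) := by rw [sub_eq_zero.1 h]; exact hw
        have htop : W (n+1) = ⊤ := by
          refine sub_top d b A As θs hfar hnear hAsr h2 v0 hv0 _ hAv0 _
            (hv0' ▸ hW 0 (n+1) (by omega)) (hWA (n+1) le_rfl) ?_
          intro x hx
          have : W (n+1) ≤ (W (n+1)).comap As := by
            refine Submodule.span_le.2 ?_
            rintro _ ⟨j, hj, rfl⟩
            have hj' : j < n + 1 := hj
            show As (v j) ∈ W (n+1)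
            rcases Nat.lt_or_ge j n with h | h
            · exact hWAs n le_rfl _ (hW j n h)
            · rw [show j = n by omega]; exact hAsn
          exact this hx
        have hc : Module.finrank F (W (n+1)) ≤ n + 1 := by
          classical
          have h2 : (((Finset.range (n+1)).image v : Finset V) : Set V) = v '' {j | j < n+1} := by
            ext; simp
          have h3 := finrank_span_finset_le_card (R := F) ((Finset.range (n+1)).image v)
          rw [Set.finrank, h2] at h3
          exact h3.trans (Finset.card_image_le.trans (by simp))
        rw [htop, finrank_top, hdim] at hc
        omega
      refine ⟨Function.update v (n+1) (As (v n) - w), ?_, ?_⟩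
      · rw [Function.update_of_ne (by omega), hv0']
      · intro i hi hin
        have himg : Function.update v (n+1) (As (v n) - w) '' {j | j < i} = v '' {j | j < i} := by
          apply Set.image_congr
          intro j hj
          have hj' : j < i := hj
          rw [Function.update_of_ne (by omega)]
        rw [himg, Function.update_of_ne (show i - 1 ≠ n + 1 by omega)]
        rcases Nat.lt_or_ge i (n+1) with h | h
        · rw [Function.update_of_ne (by omega)]
          exact hv i hi (by omega)
        · obtain rfl : i = n + 1 := by omega
          rw [Function.update_self, Nat.add_sub_cancel]
          refine ⟨hne, ?_, ?_⟩
          · rw [map_sub, smul_sub]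
            rw [← sub_eq_zero]
            have := sub_eq_zero.2 hwe
            rw [← neg_eq_zero, ← this]; abel
          · rw [sub_sub_cancel]; exact hw
  exact main d hd le_rfl

end LeonardPaper
end

section
/- Let 𝔽 be a field and d ≥ 1 an integer. Let θ_{−1}, θ_0, θ_1 ∈ 𝔽, β, γ* ∈ 𝔽, and let θ*_{−1}, θ*_0, …, θ*_{d+1} ∈ 𝔽 satisfy γ* = θ*_{i−1} − βθ*_i + θ*_{i+1} for 0 ≤ i ≤ d. Let {a_i}_{i=0}^{d}, {b_i}_{i=0}^{d−1}, {c_i}_{i=1}^{d} be scalars in 𝔽 with b_d = c_0 = 0, and let a*_0, Ω ∈ 𝔽 be such that: c_i + a_i + b_i = θ_0 for 0 ≤ i ≤ d; c_i(θ*_{i−1} − θ*_i) − b_i(θ*_i − θ*_{i+1}) = (θ_1 − θ_0)(θ*_i − a*_0) for 0 ≤ i ≤ d; and c_i(θ*_{i−1} − θ*_{i+1}) − b_{i−1}(θ*_{i−2} − θ*_i) − (θ_0 − θ_{−1})(θ*_{i−1} + θ*_i) = Ω for 1 ≤ i ≤ d. Define γ = θ_{−1} − βθ_0 + θ_1 and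 ω = 2θ_0(a*_0 − γ*) − 2θ_1a*_0 − Ω. Then a_i(θ*_i − θ*_{i+1}) + a_{i−1}(θ*_{i−1} − θ*_{i−2}) − γ(θ*_{i−1} + θ*_i) = ω for 1 ≤ i ≤ d, and consequently the scalar a_i(θ*_i − θ*_{i−1})(θ*_i − θ*_{i+1}) − γθ*_i² − ωθ*_i is independent of i for 0 ≤ i ≤ d; that is, there exists η* ∈ 𝔽 such that a_i(θ*_i − θ*_{i−1})(θ*_i − θ*_{i+1}) = γθ*_i² + ωθ*_i + η* for 0 ≤ i ≤ d. -/
/-- The chain of identities from the proof of the second main theorem verifying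
condition (v) of the first main theorem: with `γ = θ_{-1} − βθ_0 + θ_1` and
`ω = 2θ_0(a*_0 − γ*) − 2θ_1 a*_0 − Ω`, one has
`a_i(θ*_i − θ*_{i+1}) + a_{i-1}(θ*_{i-1} − θ*_{i-2}) − γ(θ*_{i-1} + θ*_i) = ω`
for `1 ≤ i ≤ d`, and consequently there exists `η*` with
`a_i(θ*_i − θ*_{i-1})(θ*_i − θ*_{i+1}) = γθ*_i² + ωθ*_i + η*` for `0 ≤ i ≤ d`. -/
theorem condition_v_verification {F : Type*} [Field F]
    (d : ℕ) (hd : 1 ≤ d)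
    (θm1 θ0 θ1 β γs : F) (θs : ℤ → F)
    (hrec : ∀ i : ℤ, 0 ≤ i → i ≤ d → γs = θs (i - 1) - β * θs i + θs (i + 1))
    (a b c : ℕ → F) (hbd : b d = 0) (hc0 : c 0 = 0)
    (astar0 Ω : F)
    (hsum : ∀ i : ℕ, i ≤ d → c i + a i + b i = θ0)
    (hbici : ∀ i : ℕ, i ≤ d →
      c i * (θs ((i : ℤ) - 1) - θs i) - b i * (θs i - θs ((i : ℤ) + 1))
        = (θ1 - θ0) * (θs i - astar0))
    (hΩ : ∀ i : ℕ, 1 ≤ i → i ≤ d →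
      c i * (θs ((i : ℤ) - 1) - θs ((i : ℤ) + 1)) - b (i - 1) * (θs ((i : ℤ) - 2) - θs i)
        - (θ0 - θm1) * (θs ((i : ℤ) - 1) + θs i) = Ω) :
    let γ : F := θm1 - β * θ0 + θ1
    let ω : F := 2 * θ0 * (astar0 - γs) - 2 * θ1 * astar0 - Ω
    (∀ i : ℕ, 1 ≤ i → i ≤ d →
      a i * (θs i - θs ((i : ℤ) + 1)) + a (i - 1) * (θs ((i : ℤ) - 1) - θs ((i : ℤ) - 2))
        - γ * (θs ((i : ℤ) - 1) + θs i) = ω) ∧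
    ∃ ηs : F, ∀ i : ℕ, i ≤ d →
      a i * ((θs i - θs ((i : ℤ) - 1)) * (θs i - θs ((i : ℤ) + 1)))
        = γ * θs i ^ 2 + ω * θs i + ηs := by
  intro γ ω
  have key : ∀ j : ℕ, j + 1 ≤ d →
      a (j + 1) * (θs ((j : ℤ) + 1) - θs ((j : ℤ) + 2)) + a j * (θs j - θs ((j : ℤ) - 1))
        - γ * (θs j + θs ((j : ℤ) + 1)) = ω := by
    intro j hj
    have r1 := hrec j (by omega) (by omega)
    have r2 := hrec ((j : ℤ) + 1) (by omega) (by omega)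
    have s1 := hsum j (by omega)
    have s2 := hsum (j + 1) hj
    have t1 := hbici j (by omega)
    have t2 := hbici (j + 1) hj
    have o := hΩ (j + 1) (by omega) hj
    have e1 : (j : ℤ) + 1 - 1 = j := by ring
    have e2 : (j : ℤ) + 1 + 1 = j + 2 := by ring
    have e3 : (j : ℤ) + 1 - 2 = j - 1 := by ring
    push_cast at t2 o
    simp only [e1, e2, e3, Nat.add_sub_cancel] at r2 t2 o
    simp only [γ, ω]
    linear_combination s2 * (θs ((j : ℤ) + 1) - θs ((j : ℤ) + 2))
      + s1 * (θs j - θs ((j : ℤ) - 1)) + t1 + t2 - o + θ0 * (r1 + r2)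
  clear_value γ ω
  refine ⟨?_, a 0 * ((θs 0 - θs (-1)) * (θs 0 - θs 1)) - γ * θs 0 ^ 2 - ω * θs 0, ?_⟩
  · intro i hi hid
    obtain ⟨j, rfl⟩ : ∃ j, i = j + 1 := ⟨i - 1, by omega⟩
    have k := key j hid
    have e1 : (j : ℤ) + 1 - 1 = j := by ring
    have e2 : (j : ℤ) + 1 + 1 = j + 2 := by ring
    have e3 : (j : ℤ) + 1 - 2 = j - 1 := by ring
    push_cast
    simp only [e1, e2, e3, Nat.add_sub_cancel]
    exact k
  · intro i
    induction i with
    | zero =>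
      intro _
      simp
    | succ j ih =>
      intro hj
      have k := key j hj
      have h := ih (by omega)
      have e1 : (j : ℤ) + 1 - 1 = j := by ring
      have e2 : (j : ℤ) + 1 + 1 = j + 2 := by ring
      push_cast
      simp only [e1, e2]
      linear_combination h + (θs ((j : ℤ) + 1) - θs j) * k
end

section
/- Let 𝔽 be a field and d ≥ 1 an integer. Let a, b, c, q be nonzero scalars in 𝔽 such that q^{2i} ≠ 1 for 1 ≤ i ≤ d, neither a² nor b² is among q^{2d−2}, q^{2d−4}, …, q^{2−2d}, and none of abc, a^{−1}bc, ab^{−1}c, abc^{−1} is among q^{d−1}, q^{d−3}, …, q^{1−d}. Define θ*_i = bq^{2i−d} + b^{−1}q^{d−2i} for 0 ≤ i ≤ d, and define b_0, b_i (1 ≤ i ≤ d−1), c_i (1 ≤ i ≤ d−1), c_d by the q-Racah formulas: b_0 = (q^{d} − q^{−d})(cq − a^{−1}b^{−1}q^{d})(q^{−1} − abc^{−1}q^{−d})/(bq^{1−d} − b^{−1}q^{d−1}); b_i = (q^{d−i} − q^{i−d})(bq^{i−d} − b^{−1}q^{d−i})(cq^{i+1} − a^{−1}b^{−1}q^{d−i})(q^{−i−1}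 − abc^{−1}q^{i−d}) / ((bq^{2i−d} − b^{−1}q^{d−2i})(bq^{2i−d+1} − b^{−1}q^{d−2i−1})); c_i = (q^{i} − q^{−i})(bq^{i} − b^{−1}q^{−i})(a^{−1}q^{i−d−1} − b^{−1}c^{−1}q^{−i})(bq^{i} − acq^{d−i+1}) / ((bq^{2i−d−1} − b^{−1}q^{d−2i+1})(bq^{2i−d} − b^{−1}q^{d−2i})); c_d = (q^{d} − q^{−d})(a^{−1}q^{−1} − b^{−1}c^{−1}q^{−d})(bq^{d} − acq)/(bq^{d−1} − b^{−1}q^{1−d}). Define φ_1 = b_0(θ*_1 − θ*_0), φ_i = b_{i−1}·[(θ*_i − θ*_0)⋯(θ*_i − θ*_{i−1})] / [(θ*_{i−1} − θ*_0)⋯(θ*_{i−1} − θ*_{i−2})] for 2 ≤ i ≤ d, φ'_i = c_i·[(θ*_{i−1} − θ*_d)⋯(θ*_{i−1} − θ*_i)] / [(θ*_i − θ*_d)⋯(θ*_i − θ*_{i+1})] for 1 ≤ i ≤ d−1, and φ'_d = c_d(θ*_{d−1} − θ*_d). Then for 1 ≤ i ≤ d: φ_i = a^{−1}b^{−1}q^{d+1}(q^{i}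 − q^{−i})(q^{i−d−1} − q^{d−i+1})(q^{−i} − abcq^{i−d−1})(q^{−i} − abc^{−1}q^{i−d−1}) and φ'_i = ab^{−1}q^{d+1}(q^{i} − q^{−i})(q^{i−d−1} − q^{d−i+1})(q^{−i} − a^{−1}bcq^{i−d−1})(q^{−i} − a^{−1}bc^{−1}q^{i−d−1}). -/
theorem qr_fac {F : Type*} [Field F] (b q : F) (hb : b ≠ 0) (hq : q ≠ 0) (d i j : ℤ) :
    (b * q ^ (2 * i - d) + b⁻¹ * q ^ (d - 2 * i)) - (b * q ^ (2 * j - d) + b⁻¹ * q ^ (d - 2 * j))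
    = (b * q ^ (i + j - d) - b⁻¹ * q ^ (d - (i + j))) * (q ^ (i - j) - q ^ (-(i - j))) := by
  have e1 : q ^ (2 * i - d) = q ^ (i + j - d) * q ^ (i - j) := by
    rw [← zpow_add₀ hq]; congr 1; ring
  have e2 : q ^ (d - 2 * i) = q ^ (d - (i + j)) * q ^ (-(i - j)) := by
    rw [← zpow_add₀ hq]; congr 1; ring
  have e3 : q ^ (2 * j - d) = q ^ (i + j - d) * q ^ (-(i - j)) := by
    rw [← zpow_add₀ hq]; congr 1; ring
  have e4 : q ^ (d - 2 * j) = q ^ (d - (i + j)) * q ^ (i - j) := by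
    rw [← zpow_add₀ hq]; congr 1; ring
  rw [e1, e2, e3, e4]; ring

theorem qr_tel1 {F : Type*} [Field F] (B S : ℤ → F) (n : ℕ) :
    (∏ j ∈ Finset.range (n + 1), (B ((n : ℤ) + 1 + (j : ℤ)) * S ((n : ℤ) + 1 - (j : ℤ)))) * B n
    = S ((n : ℤ) + 1) * B (2 * n) * B (2 * n + 1) *
      ∏ j ∈ Finset.range n, (B ((n : ℤ) + (j : ℤ)) * S ((n : ℤ) - (j : ℤ))) := by
  have h1 : (∏ j ∈ Finset.range (n + 1), B ((n : ℤ) + 1 + (j : ℤ))) * B n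
      = (∏ j ∈ Finset.range n, B ((n : ℤ) + (j : ℤ))) * B (2 * n) * B (2 * n + 1) := by
    have h := Finset.prod_range_succ' (fun j : ℕ => B ((n : ℤ) + (j : ℤ))) (n + 1)
    rw [Finset.prod_range_succ, Finset.prod_range_succ] at h
    have e1 : (n : ℤ) + (n : ℤ) = 2 * n := by ring
    have e2 : (n : ℤ) + ((n + 1 : ℕ) : ℤ) = 2 * n + 1 := by push_cast; ring
    rw [e1, e2] at h
    rw [h]
    congr 1
    · apply Finset.prod_congr rfl; intro j _; congr 1; push_cast; ring
  have h2 : (∏ j ∈ Finset.range (n + 1), S ((n : ℤ) + 1 - (j : ℤ)))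
      = (∏ j ∈ Finset.range n, S ((n : ℤ) - (j : ℤ))) * S ((n : ℤ) + 1) := by
    rw [Finset.prod_range_succ']
    congr 1
    · apply Finset.prod_congr rfl; intro j _; congr 1; push_cast; ring
  rw [Finset.prod_mul_distrib, Finset.prod_mul_distrib, mul_right_comm, h1, h2]; ring

theorem qr_tel2 {F : Type*} [Field F] (B S : ℤ → F) (i m : ℕ) :
    (∏ j ∈ Finset.Icc i (i + m), (B ((i : ℤ) - 1 + (j : ℤ)) * S ((i : ℤ) - 1 - (j : ℤ)))) *
      B (2 * i + m)
    = S (-1 - (m : ℤ)) * B (2 * i - 1) * B (2 * i) *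
      ∏ j ∈ Finset.Icc (i + 1) (i + m), (B ((i : ℤ) + (j : ℤ)) * S ((i : ℤ) - (j : ℤ))) := by
  have r1 : ∀ f : ℕ → F, ∏ j ∈ Finset.Icc i (i + m), f j
      = ∏ k ∈ Finset.range (m + 1), f (i + k) := by
    intro f
    rw [← Finset.Ico_succ_right_eq_Icc, Finset.prod_Ico_eq_prod_range]
    congr 2; simp; omega
  have r2 : ∀ f : ℕ → F, ∏ j ∈ Finset.Icc (i + 1) (i + m), f j
      = ∏ k ∈ Finset.range m, f (i + 1 + k) := by
    intro f
    rw [← Finset.Ico_succ_right_eq_Icc, Finset.prod_Ico_eq_prod_range]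
    congr 2; simp
  rw [r1, r2, Finset.prod_mul_distrib, Finset.prod_mul_distrib]
  have h1 : (∏ k ∈ Finset.range (m + 1), B ((i : ℤ) - 1 + ((i + k : ℕ) : ℤ))) * B (2 * i + m)
      = (∏ k ∈ Finset.range m, B ((i : ℤ) + ((i + 1 + k : ℕ) : ℤ))) * B (2 * i) * B (2 * i - 1) := by
    have h := Finset.prod_range_succ' (fun j : ℕ => B (2 * (i : ℤ) - 1 + (j : ℤ))) (m + 1)
    rw [Finset.prod_range_succ, Finset.prod_range_succ' _ m] at h
    have e1 : 2 * (i : ℤ) - 1 + ((m + 1 : ℕ) : ℤ) = 2 * i + m := by push_cast; ring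
    have e2 : 2 * (i : ℤ) - 1 + ((0 + 1 : ℕ) : ℤ) = 2 * i := by push_cast; ring
    have e3 : 2 * (i : ℤ) - 1 + ((0 : ℕ) : ℤ) = 2 * i - 1 := by push_cast; ring
    rw [Finset.prod_range_succ' _ m, e1, e2, e3] at h
    rw [Finset.prod_range_succ' _ m]
    have e4 : (i : ℤ) - 1 + ((i + 0 : ℕ) : ℤ) = 2 * i - 1 := by push_cast; ring
    rw [e4]
    convert h using 3
    · apply Finset.prod_congr rfl; intro j _; congr 1; push_cast; ring
    · apply Finset.prod_congr rfl; intro j _; congr 1; push_cast; ring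
  have h2 : (∏ k ∈ Finset.range (m + 1), S ((i : ℤ) - 1 - ((i + k : ℕ) : ℤ)))
      = (∏ k ∈ Finset.range m, S ((i : ℤ) - ((i + 1 + k : ℕ) : ℤ))) * S (-1 - (m : ℤ)) := by
    rw [Finset.prod_range_succ]
    congr 1
    · apply Finset.prod_congr rfl; intro j _; congr 1; push_cast; ring
    · congr 1; push_cast; ring
  rw [mul_right_comm, h1, h2]; ring

/-- The split sequences of the q-Racah-type Leonard system (Section 7 of the paper):
with the q-Racah dual eigenvalues `θ*_i` and intersection numbers `b_i`, `c_i`, the first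
and second split sequences, computed via formulas (7.1)–(7.4), are
`φ_i  = a⁻¹b⁻¹q^{d+1}(qⁱ − q⁻ⁱ)(q^{i−d−1} − q^{d−i+1})(q⁻ⁱ − abcq^{i−d−1})(q⁻ⁱ − abc⁻¹q^{i−d−1})`
and
`φ'_i = ab⁻¹q^{d+1}(qⁱ − q⁻ⁱ)(q^{i−d−1} − q^{d−i+1})(q⁻ⁱ − a⁻¹bcq^{i−d−1})(q⁻ⁱ − a⁻¹bc⁻¹q^{i−d−1})`
for `1 ≤ i ≤ d`. -/
theorem qRacah_split_sequences {F : Type*} [Field F] (d : ℕ) (hd : 1 ≤ d)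
    (a b c q : F) (ha : a ≠ 0) (hb : b ≠ 0) (hc : c ≠ 0) (hq : q ≠ 0)
    (hq1 : ∀ i : ℤ, 1 ≤ i → i ≤ d → q ^ (2 * i) ≠ 1)
    (ha2 : ∀ i : ℤ, 1 - (d : ℤ) ≤ i → i ≤ (d : ℤ) - 1 → a ^ 2 ≠ q ^ (2 * i))
    (hb2 : ∀ i : ℤ, 1 - (d : ℤ) ≤ i → i ≤ (d : ℤ) - 1 → b ^ 2 ≠ q ^ (2 * i))
    (habc : ∀ i : ℤ, 1 ≤ i → i ≤ d →
      a * b * c ≠ q ^ ((d : ℤ) + 1 - 2 * i) ∧ a⁻¹ * b * c ≠ q ^ ((d : ℤ) + 1 - 2 * i) ∧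
      a * b⁻¹ * c ≠ q ^ ((d : ℤ) + 1 - 2 * i) ∧ a * b * c⁻¹ ≠ q ^ ((d : ℤ) + 1 - 2 * i)) :
    let θs : ℤ → F := fun i => b * q ^ (2 * i - (d : ℤ)) + b⁻¹ * q ^ ((d : ℤ) - 2 * i)
    let bseq : ℕ → F := fun i =>
      if i = 0 then
        (q ^ (d : ℤ) - q ^ (-(d : ℤ))) * (c * q - a⁻¹ * b⁻¹ * q ^ (d : ℤ)) *
          (q⁻¹ - a * b * c⁻¹ * q ^ (-(d : ℤ))) /
          (b * q ^ (1 - (d : ℤ)) - b⁻¹ * q ^ ((d : ℤ) - 1))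
      else if i = d then 0
      else
        (q ^ ((d : ℤ) - (i : ℤ)) - q ^ ((i : ℤ) - (d : ℤ))) *
          (b * q ^ ((i : ℤ) - (d : ℤ)) - b⁻¹ * q ^ ((d : ℤ) - (i : ℤ))) *
          (c * q ^ ((i : ℤ) + 1) - a⁻¹ * b⁻¹ * q ^ ((d : ℤ) - (i : ℤ))) *
          (q ^ (-(i : ℤ) - 1) - a * b * c⁻¹ * q ^ ((i : ℤ) - (d : ℤ))) /
          ((b * q ^ (2 * (i : ℤ) - (d : ℤ)) - b⁻¹ * q ^ ((d : ℤ) - 2 * (i : ℤ))) *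
            (b * q ^ (2 * (i : ℤ) - (d : ℤ) + 1) - b⁻¹ * q ^ ((d : ℤ) - 2 * (i : ℤ) - 1)))
    let cseq : ℕ → F := fun i =>
      if i = 0 then 0
      else if i = d then
        (q ^ (d : ℤ) - q ^ (-(d : ℤ))) * (a⁻¹ * q⁻¹ - b⁻¹ * c⁻¹ * q ^ (-(d : ℤ))) *
          (b * q ^ (d : ℤ) - a * c * q) /
          (b * q ^ ((d : ℤ) - 1) - b⁻¹ * q ^ (1 - (d : ℤ)))
      else
        (q ^ (i : ℤ) - q ^ (-(i : ℤ))) * (b * q ^ (i : ℤ) - b⁻¹ * q ^ (-(i : ℤ))) *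
          (a⁻¹ * q ^ ((i : ℤ) - (d : ℤ) - 1) - b⁻¹ * c⁻¹ * q ^ (-(i : ℤ))) *
          (b * q ^ (i : ℤ) - a * c * q ^ ((d : ℤ) - (i : ℤ) + 1)) /
          ((b * q ^ (2 * (i : ℤ) - (d : ℤ) - 1) - b⁻¹ * q ^ ((d : ℤ) - 2 * (i : ℤ) + 1)) *
            (b * q ^ (2 * (i : ℤ) - (d : ℤ)) - b⁻¹ * q ^ ((d : ℤ) - 2 * (i : ℤ))))
    let φ : ℕ → F := fun i =>
      bseq (i - 1) * (∏ j ∈ Finset.range i, (θs i - θs j)) /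
        ∏ j ∈ Finset.range (i - 1), (θs ((i : ℤ) - 1) - θs j)
    let φ' : ℕ → F := fun i =>
      cseq i * (∏ j ∈ Finset.Icc i d, (θs ((i : ℤ) - 1) - θs j)) /
        ∏ j ∈ Finset.Icc (i + 1) d, (θs i - θs j)
    ∀ i : ℕ, 1 ≤ i → i ≤ d →
      φ i = a⁻¹ * b⁻¹ * q ^ ((d : ℤ) + 1) * (q ^ (i : ℤ) - q ^ (-(i : ℤ))) *
          (q ^ ((i : ℤ) - (d : ℤ) - 1) - q ^ ((d : ℤ) - (i : ℤ) + 1)) *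
          (q ^ (-(i : ℤ)) - a * b * c * q ^ ((i : ℤ) - (d : ℤ) - 1)) *
          (q ^ (-(i : ℤ)) - a * b * c⁻¹ * q ^ ((i : ℤ) - (d : ℤ) - 1)) ∧
      φ' i = a * b⁻¹ * q ^ ((d : ℤ) + 1) * (q ^ (i : ℤ) - q ^ (-(i : ℤ))) *
          (q ^ ((i : ℤ) - (d : ℤ) - 1) - q ^ ((d : ℤ) - (i : ℤ) + 1)) *
          (q ^ (-(i : ℤ)) - a⁻¹ * b * c * q ^ ((i : ℤ) - (d : ℤ) - 1)) *
          (q ^ (-(i : ℤ)) - a⁻¹ * b * c⁻¹ * q ^ ((i : ℤ) - (d : ℤ) - 1)) := by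
  intro θs bseq cseq φ φ' i hi1 hid
  set B : ℤ → F := fun k => b * q ^ (k - (d : ℤ)) - b⁻¹ * q ^ ((d : ℤ) - k) with hB
  set S : ℤ → F := fun k => q ^ k - q ^ (-k) with hS
  have hθ : ∀ i j : ℤ, θs i - θs j = B (i + j) * S (i - j) := fun i j =>
    qr_fac b q hb hq d i j
  have hS0 : ∀ k : ℤ, 1 ≤ k → k ≤ d → S k ≠ 0 := by
    intro k h1 h2 h
    apply hq1 k h1 h2
    have h3 : q ^ k = q ^ (-k) := sub_eq_zero.mp h
    rw [two_mul, zpow_add₀ hq]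
    nth_rewrite 1 [h3]
    rw [← zpow_add₀ hq]; simp
  have hSneg : ∀ k : ℤ, S (-k) = - S k := by intro k; simp [hS]
  have hS0' : ∀ k : ℤ, k ≤ -1 → -(d : ℤ) ≤ k → S k ≠ 0 := by
    intro k h1 h2 h
    apply hS0 (-k) (by omega) (by omega)
    rw [hSneg, h, neg_zero]
  have hB0 : ∀ k : ℤ, 1 ≤ k → k ≤ 2 * d - 1 → B k ≠ 0 := by
    intro k h1 h2 h
    apply hb2 (d - k) (by omega) (by omega)
    have h3 : b * q ^ (k - (d : ℤ)) = b⁻¹ * q ^ ((d : ℤ) - k) := sub_eq_zero.mp h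
    have e : q ^ (k - (d : ℤ)) * q ^ ((d : ℤ) - k) = 1 := by
      rw [← zpow_add₀ hq]; simp
    calc b ^ 2 = b * (b * q ^ (k - (d : ℤ))) * q ^ ((d : ℤ) - k) := by
          linear_combination (- b ^ 2) * e
      _ = q ^ ((d : ℤ) - k) * q ^ ((d : ℤ) - k) := by rw [h3]; field_simp
      _ = _ := by rw [← zpow_add₀ hq]; congr 1; ring
  constructor
  · obtain ⟨n, rfl⟩ : ∃ n, i = n + 1 := ⟨i - 1, by omega⟩
    have key : φ (n + 1) = S (n + 1) * S (d - n) *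
        (c * q ^ ((n : ℤ) + 1) - a⁻¹ * b⁻¹ * q ^ ((d : ℤ) - (n : ℤ))) *
          (q ^ (-(n : ℤ) - 1) - a * b * c⁻¹ * q ^ ((n : ℤ) - (d : ℤ))) := by
      have hden : (∏ j ∈ Finset.range n, (B ((n : ℤ) + (j : ℤ)) * S ((n : ℤ) - (j : ℤ)))) ≠ 0 := by
        rw [Finset.prod_ne_zero_iff]
        intro j hj
        have := Finset.mem_range.mp hj
        exact mul_ne_zero (hB0 _ (by omega) (by omega)) (hS0 _ (by omega) (by omega))
      have t := qr_tel1 B S n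
      simp only [φ, hθ, Nat.add_sub_cancel]
      push_cast
      simp only [add_sub_cancel_right]
      rw [div_eq_iff hden]
      rcases Nat.eq_zero_or_pos n with rfl | hn
      · have h1 := hB0 1 (by omega) (by omega)
        simp only [bseq, if_true]
        have e : b * q ^ (1 - (d : ℤ)) - b⁻¹ * q ^ ((d : ℤ) - 1) = B 1 := rfl
        rw [e]
        simp [hS]
        field_simp
      · have hb1 := hB0 n (by omega) (by omega)
        have hb2 := hB0 (2 * n) (by omega) (by omega)
        have hb3 := hB0 (2 * n + 1) (by omega) (by omega)
        have hbs : bseq n = S (d - n) * B n *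
          (c * q ^ ((n : ℤ) + 1) - a⁻¹ * b⁻¹ * q ^ ((d : ℤ) - (n : ℤ))) *
          (q ^ (-(n : ℤ) - 1) - a * b * c⁻¹ * q ^ ((n : ℤ) - (d : ℤ))) /
          (B (2 * n) * B (2 * n + 1)) := by
          have e1 : B (2 * n + 1) =
              b * q ^ (2 * (n : ℤ) - (d : ℤ) + 1) - b⁻¹ * q ^ ((d : ℤ) - 2 * (n : ℤ) - 1) := by
            simp only [hB]; congr 3 <;> ring
          rw [e1]
          simp only [bseq, if_neg (show n ≠ 0 by omega), if_neg (show n ≠ d by omega), hB, hS,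
            neg_sub]
        rw [hbs, div_mul_eq_mul_div, div_eq_iff (mul_ne_zero hb2 hb3)]
        linear_combination (S (d - n) *
          (c * q ^ ((n : ℤ) + 1) - a⁻¹ * b⁻¹ * q ^ ((d : ℤ) - (n : ℤ))) *
          (q ^ (-(n : ℤ) - 1) - a * b * c⁻¹ * q ^ ((n : ℤ) - (d : ℤ)))) * t
    rw [key]
    simp only [hS]
    push_cast
    simp only [zpow_add₀ hq, zpow_sub₀ hq, zpow_neg, zpow_one, neg_sub, neg_add]
    field_simp
    ring
  · obtain ⟨m, hm⟩ : ∃ m, d = i + m := ⟨d - i, by omega⟩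
    have key : φ' i = S i * S (-1 - (m : ℤ)) *
          (a⁻¹ * q ^ ((i : ℤ) - (d : ℤ) - 1) - b⁻¹ * c⁻¹ * q ^ (-(i : ℤ))) *
          (b * q ^ (i : ℤ) - a * c * q ^ ((d : ℤ) - (i : ℤ) + 1)) := by
      have hden : (∏ j ∈ Finset.Icc (i + 1) d, (B ((i : ℤ) + (j : ℤ)) * S ((i : ℤ) - (j : ℤ)))) ≠ 0 := by
        rw [Finset.prod_ne_zero_iff]
        intro j hj
        have := Finset.mem_Icc.mp hj
        exact mul_ne_zero (hB0 _ (by omega) (by omega)) (hS0' _ (by omega) (by omega))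
      have t := qr_tel2 B S i m
      rw [← hm] at t
      simp only [φ', hθ]
      rw [div_eq_iff hden]
      rcases Nat.eq_zero_or_pos m with rfl | hmp
      · have hid : i = d := by omega
        subst hid
        have h1 := hB0 (2 * i - 1) (by omega) (by omega)
        have e : b * q ^ ((i : ℤ) - 1) - b⁻¹ * q ^ (1 - (i : ℤ)) = B (2 * i - 1) := by
          simp only [hB]; congr 3 <;> ring
        have e2 : (i : ℤ) - 1 + i = 2 * i - 1 := by ring
        simp only [cseq, if_neg (show i ≠ 0 by omega), if_true]
        rw [e]
        simp [e2]
        field_simp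
        simp [hS]
        field_simp
      · have hb1 := hB0 (2 * i + m) (by omega) (by omega)
        have hb2 := hB0 (2 * i - 1) (by omega) (by omega)
        have hb3 := hB0 (2 * i) (by omega) (by omega)
        have hcs : cseq i = S i * B (2 * i + m) *
          (a⁻¹ * q ^ ((i : ℤ) - (d : ℤ) - 1) - b⁻¹ * c⁻¹ * q ^ (-(i : ℤ))) *
          (b * q ^ (i : ℤ) - a * c * q ^ ((d : ℤ) - (i : ℤ) + 1)) /
          (B (2 * i - 1) * B (2 * i)) := by
          have e1 : B (2 * i + m) = b * q ^ (i : ℤ) - b⁻¹ * q ^ (-(i : ℤ)) := by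
            simp only [hB]
            have : (d : ℤ) = i + m := by omega
            rw [this]; congr 3 <;> ring
          have e2 : B (2 * i - 1) =
              b * q ^ (2 * (i : ℤ) - (d : ℤ) - 1) - b⁻¹ * q ^ ((d : ℤ) - 2 * (i : ℤ) + 1) := by
            simp only [hB]; congr 3 <;> ring
          rw [e1, e2]
          simp only [cseq, if_neg (show i ≠ 0 by omega), if_neg (show i ≠ d by omega), hB, hS]
        rw [hcs, div_mul_eq_mul_div, div_eq_iff (mul_ne_zero hb2 hb3)]
        linear_combination (S i *
          (a⁻¹ * q ^ ((i : ℤ) - (d : ℤ) - 1) - b⁻¹ * c⁻¹ * q ^ (-(i : ℤ))) *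
          (b * q ^ (i : ℤ) - a * c * q ^ ((d : ℤ) - (i : ℤ) + 1))) * t
    have hm' : -1 - (m : ℤ) = i - d - 1 := by omega
    rw [key, hm']
    simp only [hS]
    simp only [zpow_add₀ hq, zpow_sub₀ hq, zpow_neg, zpow_one, neg_sub, neg_add]
    field_simp
    ring
end
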